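/- Fix ρ > 0, λ ∈ ℝ and α ∈ ℝ, and let (γ_n) be a sequence of positive reals with γ_n/n^α → ρ as n → ∞. Define λ_n = n^(n(α−1))·e^(nλ) and M_n = λ_n·n!·κ_n·(n·κ_n/(2γ_n·κ_{n-1}))ⁿ. Then (1/n)·ln M_n → λ + ln π − ln ρ − 1/2 as n → ∞; consequently M_n → 0 if ρ > e^λ·π/√e, and M_n → ∞ if ρ < e^λ·π/√e. -/

import Mathlib

/-!
Let `V_n = n! κ_n (n κ_n / (2 γ_n κ_{n-1}))ⁿ`, so that `M_n = λ_n V_n`. Only two facts about the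
ball volumes are needed: Legendre's duplication formula gives `κ_n κ_{n-1} = (2π)ⁿ / (π n!)`, and
log-convexity of `Γ` gives `κ_n / κ_{n-1} ∼ √(2π / n)`. Multiplying the two and applying Stirling's
formula to `n!` yields `κ_n^(1/n) ∼ √(2πe / n)`, hence `V_n^(1/n) ∼ (n / γ_n) ⬝ π / √e`. The powers
of `n` in `λ_n^(1/n) = n^(α-1) e^λ` and in `γ_n ∼ ρ n^α` cancel this factor `n`, so `M_n` grows or
decays exponentially according to the sign of `λ + log π - log ρ - 1/2`.
-/

open Filter Real

/-- `κ n`, the volume of the unit ball in `ℝⁿ`. -/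
noncomputable def kappa (n : ℕ) : ℝ := Real.pi ^ ((n : ℝ) / 2) / Real.Gamma ((n : ℝ) / 2 + 1)

open scoped Topology

section ExponentialGrowth

variable {ι : Type*} {l : Filter ι} {a u : ι → ℝ} {L : ℝ}

lemma tendsto_zero_of_tendsto_log_div_neg (ha : Tendsto a l atTop) (hu : ∀ᶠ i in l, 0 < u i)
    (hlog : Tendsto (fun i => log (u i) / a i) l (𝓝 L)) (hL : L < 0) : Tendsto u l (𝓝 0) := by
  refine (tendsto_exp_atBot.comp (ha.atTop_mul_neg hL hlog)).congr' ?_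
  filter_upwards [hu, ha.eventually_ne_atTop 0] with i hui hai
  rw [Function.comp_apply, mul_div_cancel₀ _ hai, exp_log hui]

lemma tendsto_atTop_of_tendsto_log_div_pos (ha : Tendsto a l atTop) (hu : ∀ᶠ i in l, 0 < u i)
    (hlog : Tendsto (fun i => log (u i) / a i) l (𝓝 L)) (hL : 0 < L) : Tendsto u l atTop := by
  refine (tendsto_exp_atTop.comp (ha.atTop_mul_pos hL hlog)).congr' ?_
  filter_upwards [hu, ha.eventually_ne_atTop 0] with i hui hai
  rw [Function.comp_apply, mul_div_cancel₀ _ hai, exp_log hui]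

end ExponentialGrowth

section Stirling

lemma tendsto_log_natCast_div_natCast :
    Tendsto (fun n : ℕ => log (n : ℝ) / n) atTop (𝓝 0) :=
  isLittleO_log_id_atTop.tendsto_div_nhds_zero.comp tendsto_natCast_atTop_atTop

lemma log_factorial_div_sub_log {n : ℕ} (hn : n ≠ 0) :
    log (n.factorial : ℝ) / n - log n =
      (log (Stirling.stirlingSeq n) + log 2 / 2) / n + log n / n / 2 - 1 := by
  have hn' : (n : ℝ) ≠ 0 := Nat.cast_ne_zero.mpr hn
  rw [Stirling.log_stirlingSeq_formula, log_mul two_ne_zero hn', log_div hn' (exp_ne_zero 1),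
    log_exp]
  field

lemma tendsto_log_factorial_div_sub_log :
    Tendsto (fun n : ℕ => log (n.factorial : ℝ) / n - log n) atTop (𝓝 (-1)) := by
  have hstirling : Tendsto (fun n : ℕ => log (Stirling.stirlingSeq n)) atTop (𝓝 (log √π)) :=
    Stirling.tendsto_stirlingSeq_sqrt_pi.log (by positivity)
  have hlim := (((hstirling.add_const (log 2 / 2)).div_atTop tendsto_natCast_atTop_atTop).add
    (tendsto_log_natCast_div_natCast.div_const 2)).sub_const 1
  rw [show (0 : ℝ) + 0 / 2 - 1 = -1 by norm_num] at hlim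
  refine hlim.congr' ?_
  filter_upwards [eventually_ne_atTop 0] with n hn
  exact (log_factorial_div_sub_log hn).symm

end Stirling

section GammaRatio

variable {s : ℝ}

lemma Gamma_add_half_le_Gamma_mul_sqrt (hs : 0 < s) : Gamma (s + 1 / 2) ≤ Gamma s * √s := by
  have hΓ : 0 ≤ Gamma s := (Gamma_pos_of_pos hs).le
  calc Gamma (s + 1 / 2)
      = Gamma (1 / 2 * s + 1 / 2 * (s + 1)) := by ring_nf
    _ ≤ Gamma s ^ (1 / 2 : ℝ) * Gamma (s + 1) ^ (1 / 2 : ℝ) :=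
        Gamma_mul_add_mul_le_rpow_Gamma_mul_rpow_Gamma hs (by positivity) one_half_pos
          one_half_pos (add_halves 1)
    _ = Gamma s * √s := by
        rw [← sqrt_eq_rpow, ← sqrt_eq_rpow, Gamma_add_one hs.ne', sqrt_mul hs.le, mul_left_comm,
          mul_self_sqrt hΓ, mul_comm]

lemma sqrt_div_add_half_le_Gamma_add_half_div (hs : 0 < s) :
    √(s / (s + 1 / 2)) ≤ Gamma (s + 1 / 2) / (Gamma s * √s) := by
  have hstep : Gamma s * s ≤ Gamma (s + 1 / 2) * √(s + 1 / 2) := by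
    have h := Gamma_add_half_le_Gamma_mul_sqrt (s := s + 1 / 2) (by positivity)
    rwa [add_assoc, add_halves, Gamma_add_one hs.ne', mul_comm s] at h
  rw [sqrt_div hs.le, div_le_div_iff₀ (by positivity) (by positivity), mul_left_comm,
    mul_self_sqrt hs.le]
  exact hstep

lemma tendsto_Gamma_add_half_div :
    Tendsto (fun x => Gamma (x + 1 / 2) / (Gamma x * √x)) atTop (𝓝 1) := by
  have hlower : Tendsto (fun x : ℝ => √(x / (x + 1 / 2))) atTop (𝓝 1) := by
    have hshift : Tendsto (fun x : ℝ => x + 1 / 2) atTop atTop :=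
      tendsto_atTop_add_const_right _ _ tendsto_id
    have hlim := ((tendsto_const_nhds (x := (1 / 2 : ℝ))).div_atTop hshift).const_sub 1 |>.sqrt
    rw [sub_zero, sqrt_one] at hlim
    refine hlim.congr' ?_
    filter_upwards [eventually_gt_atTop 0] with x hx
    rw [one_sub_div (by positivity), add_sub_cancel_right]
  refine tendsto_of_tendsto_of_tendsto_of_le_of_le' hlower tendsto_const_nhds ?_ ?_
  · filter_upwards [eventually_gt_atTop 0] with x hx
    exact sqrt_div_add_half_le_Gamma_add_half_div hx
  · filter_upwards [eventually_gt_atTop 0] with x hx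
    exact div_le_one_of_le₀ (Gamma_add_half_le_Gamma_mul_sqrt hx) (by positivity)

end GammaRatio

section BallVolume

variable {n : ℕ}

lemma kappa_pos (n : ℕ) : 0 < kappa n := by
  unfold kappa
  positivity

lemma kappa_pred (hn : n ≠ 0) :
    kappa (n - 1) = π ^ ((n : ℝ) / 2 - 1 / 2) / Gamma ((n : ℝ) / 2 + 1 / 2) := by
  rw [kappa, Nat.cast_pred (Nat.pos_of_ne_zero hn)]
  congr 2 <;> ring

lemma kappa_mul_kappa_pred (hn : n ≠ 0) :
    kappa n * kappa (n - 1) = (2 * π) ^ n / (π * n.factorial) := by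
  have hduplication : Gamma ((n : ℝ) / 2 + 1 / 2) * Gamma ((n : ℝ) / 2 + 1) =
      n.factorial * (2 ^ n)⁻¹ * √π := by
    have h := Gamma_mul_Gamma_add_half ((n : ℝ) / 2 + 1 / 2)
    rwa [add_assoc, add_halves, show 2 * ((n : ℝ) / 2 + 1 / 2) = n + 1 by ring,
      Gamma_nat_eq_factorial, show 1 - ((n : ℝ) + 1) = -n by ring, rpow_neg zero_le_two,
      rpow_natCast] at h
  have hpow : π ^ ((n : ℝ) / 2) * π ^ ((n : ℝ) / 2 - 1 / 2) = π ^ n / √π := by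
    rw [← rpow_add pi_pos, sqrt_eq_rpow, ← rpow_natCast π n, ← rpow_sub pi_pos]
    ring_nf
  rw [kappa_pred hn, kappa, div_mul_div_comm, hpow, mul_comm (Gamma _), hduplication, mul_pow]
  field_simp
  rw [sq_sqrt pi_pos.le]

lemma kappa_div_kappa_pred_mul_sqrt (hn : n ≠ 0) :
    kappa n / kappa (n - 1) * √n =
      √(2 * π) * (Gamma ((n : ℝ) / 2 + 1 / 2) / (Gamma ((n : ℝ) / 2) * √((n : ℝ) / 2))) := by
  have hhalf : 0 < (n : ℝ) / 2 := by positivity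
  have hpow : π ^ ((n : ℝ) / 2) = π ^ ((n : ℝ) / 2 - 1 / 2) * √π := by
    rw [sqrt_eq_rpow, ← rpow_add pi_pos, sub_add_cancel]
  have hsqrt : √(n : ℝ) = √2 * √((n : ℝ) / 2) := by
    rw [← sqrt_mul zero_le_two, mul_div_cancel₀ _ two_ne_zero]
  have hsq : √((n : ℝ) / 2) ^ 2 = (n : ℝ) / 2 := sq_sqrt hhalf.le
  rw [kappa_pred hn, kappa, hpow, Gamma_add_one hhalf.ne', hsqrt, sqrt_mul zero_le_two]
  field_simp
  rw [hsq]
  ring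

lemma tendsto_kappa_div_kappa_pred_mul_sqrt :
    Tendsto (fun n : ℕ => kappa n / kappa (n - 1) * √n) atTop (𝓝 √(2 * π)) := by
  have hhalf : Tendsto (fun n : ℕ => (n : ℝ) / 2) atTop atTop :=
    tendsto_natCast_atTop_atTop.atTop_div_const two_pos
  have hlim := (tendsto_Gamma_add_half_div.comp hhalf).const_mul √(2 * π)
  rw [mul_one] at hlim
  refine hlim.congr' ?_
  filter_upwards [eventually_ne_atTop 0] with n hn
  exact (kappa_div_kappa_pred_mul_sqrt hn).symm

lemma tendsto_log_kappa_div_kappa_pred_add :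
    Tendsto (fun n : ℕ => log (kappa n / kappa (n - 1)) + log n / 2) atTop
      (𝓝 (log (2 * π) / 2)) := by
  have hlim := tendsto_kappa_div_kappa_pred_mul_sqrt.log (by positivity)
  rw [log_sqrt (by positivity)] at hlim
  refine hlim.congr' ?_
  filter_upwards [eventually_ne_atTop 0] with n hn
  have hratio : 0 < kappa n / kappa (n - 1) := div_pos (kappa_pos n) (kappa_pos (n - 1))
  rw [log_mul hratio.ne' (by positivity), log_sqrt n.cast_nonneg]

lemma two_mul_log_kappa (hn : n ≠ 0) :
    2 * log (kappa n) = n * log (2 * π) - log π - log (n.factorial : ℝ) +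
      log (kappa n / kappa (n - 1)) := by
  have hprod := congrArg log (kappa_mul_kappa_pred hn)
  rw [log_mul (kappa_pos n).ne' (kappa_pos (n - 1)).ne', log_div (by positivity) (by positivity),
    log_pow, log_mul pi_ne_zero (by positivity)] at hprod
  rw [log_div (kappa_pos n).ne' (kappa_pos (n - 1)).ne']
  linarith

lemma tendsto_log_kappa_div_add :
    Tendsto (fun n : ℕ => log (kappa n) / n + log n / 2) atTop (𝓝 ((log (2 * π) + 1) / 2)) := by
  have hratio := (tendsto_log_kappa_div_kappa_pred_add.sub_const (log π)).div_atTop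
    (tendsto_natCast_atTop_atTop (R := ℝ))
  have hlim := (((tendsto_log_factorial_div_sub_log.const_sub (log (2 * π))).add hratio).sub
    (tendsto_log_natCast_div_natCast.div_const 2)).div_const 2
  rw [zero_div, add_zero, sub_zero, sub_neg_eq_add] at hlim
  refine hlim.congr' ?_
  filter_upwards [eventually_ne_atTop 0] with n hn
  have hlog := two_mul_log_kappa hn
  rw [show log (kappa n) = (2 * log (kappa n)) / 2 by ring, hlog]
  field

end BallVolume

section ZeroCell

variable {n : ℕ} {g : ℝ} {γ : ℕ → ℝ}

/-- The mean volume of the zero cell of a stationary isotropic Poisson hyperplane tessellation of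
intensity `g` in `ℝⁿ`, given by its closed form. For `n = 0` the index `n - 1` truncates to `0`,
harmlessly because the exponent is then `0`. -/
noncomputable def zeroCellMeanVolume (n : ℕ) (g : ℝ) : ℝ :=
  n.factorial * kappa n * ((n * kappa n) / (2 * g * kappa (n - 1))) ^ n

lemma zeroCellMeanVolume_pos (hn : n ≠ 0) (hg : 0 < g) : 0 < zeroCellMeanVolume n g := by
  have hκ := kappa_pos n
  have hκ' := kappa_pos (n - 1)
  unfold zeroCellMeanVolume
  positivity

lemma log_zeroCellMeanVolume_div (hn : n ≠ 0) (hg : 0 < g) :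
    log (zeroCellMeanVolume n g) / n =
      log (n.factorial : ℝ) / n + log (kappa n) / n + log n + log (kappa n / kappa (n - 1)) -
        log 2 - log g := by
  have hn' : (n : ℝ) ≠ 0 := Nat.cast_ne_zero.mpr hn
  have hκ := kappa_pos n
  have hκ' := kappa_pos (n - 1)
  rw [zeroCellMeanVolume, log_mul (by positivity) (by positivity), log_mul (by positivity) hκ.ne',
    log_pow, log_div (by positivity) (by positivity), log_mul hn' hκ.ne',
    log_mul (by positivity) hκ'.ne', log_mul two_ne_zero hg.ne', log_div hκ.ne' hκ'.ne']
  field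

lemma tendsto_log_zeroCellMeanVolume_div (hγ : ∀ᶠ n in atTop, 0 < γ n) :
    Tendsto (fun n : ℕ => log (zeroCellMeanVolume n (γ n)) / n + log (γ n) - log n) atTop
      (𝓝 (log π - 1 / 2)) := by
  have hlim := ((tendsto_log_factorial_div_sub_log.add tendsto_log_kappa_div_add).add
    tendsto_log_kappa_div_kappa_pred_add).sub_const (log 2)
  rw [show -1 + (log (2 * π) + 1) / 2 + log (2 * π) / 2 - log 2 = log π - 1 / 2 by
    rw [log_mul two_ne_zero pi_ne_zero]; ring] at hlim
  refine hlim.congr' ?_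
  filter_upwards [hγ, eventually_ne_atTop 0] with n hγn hn
  rw [log_zeroCellMeanVolume_div hn hγn]
  ring

/-- The intensity `λ_n = n^(n(α-1)) e^(nλ)` of the Poisson point process in `ℝⁿ`. -/
noncomputable def pointIntensity (lam α : ℝ) (n : ℕ) : ℝ :=
  (n : ℝ) ^ ((n : ℝ) * (α - 1)) * exp (n * lam)

lemma pointIntensity_pos (lam α : ℝ) (hn : n ≠ 0) : 0 < pointIntensity lam α n := by
  unfold pointIntensity
  positivity

lemma log_pointIntensity_div (lam α : ℝ) (hn : n ≠ 0) :
    log (pointIntensity lam α n) / n = (α - 1) * log n + lam := by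
  rw [pointIntensity, log_mul (by positivity) (exp_ne_zero _), log_exp, log_rpow (by positivity)]
  field

lemma tendsto_log_pointIntensity_mul_zeroCellMeanVolume_div {ρ : ℝ} (lam α : ℝ) (hρ : 0 < ρ)
    (hγ : Tendsto (fun n : ℕ => γ n / (n : ℝ) ^ α) atTop (𝓝 ρ)) :
    Tendsto (fun n : ℕ => log (pointIntensity lam α n * zeroCellMeanVolume n (γ n)) / n) atTop
      (𝓝 (lam + log π - log ρ - 1 / 2)) := by
  have hγpos : ∀ᶠ n in atTop, 0 < γ n := by
    filter_upwards [hγ.eventually_const_lt hρ, eventually_ne_atTop 0] with n hγn hn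
    exact (div_pos_iff_of_pos_right (by positivity)).mp hγn
  have hlim := ((tendsto_log_zeroCellMeanVolume_div hγpos).const_add lam).sub (hγ.log hρ.ne')
  rw [show lam + (log π - 1 / 2) - log ρ = lam + log π - log ρ - 1 / 2 by ring] at hlim
  refine hlim.congr' ?_
  filter_upwards [hγpos, eventually_ne_atTop 0] with n hγn hn
  rw [log_mul (pointIntensity_pos lam α hn).ne' (zeroCellMeanVolume_pos hn hγn).ne', add_div,
    log_pointIntensity_div lam α hn, log_div hγn.ne' (by positivity), log_rpow (by positivity)]
  ring

end ZeroCell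

lemma log_exp_mul_pi_div_sqrt_exp_one (lam : ℝ) :
    log (exp lam * π / √(exp 1)) = lam + log π - 1 / 2 := by
  rw [log_div (by positivity) (by positivity), log_mul (exp_ne_zero _) pi_ne_zero, log_exp,
    log_sqrt (exp_nonneg 1), log_exp]

/-- Asymptotics and threshold for the expected number of data points in the zero cell:
`M_n = λ_n ⬝ n! κ_n (n κ_n / (2 γ_n κ_{n-1}))^n` with `λ_n = n^{n(α-1)} e^{nλ}`,
when `γ_n ∼ ρ n^α`. -/
theorem expected_points_zero_cell_threshold (ρ lam α : ℝ) (hρ : 0 < ρ)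
    (γ : ℕ → ℝ) (hγpos : ∀ n, 0 < γ n)
    (hγ : Tendsto (fun n : ℕ => γ n / (n : ℝ) ^ α) atTop (nhds ρ))
    (lamSeq M : ℕ → ℝ)
    (hlam : ∀ n : ℕ, lamSeq n = (n : ℝ) ^ ((n : ℝ) * (α - 1)) * Real.exp ((n : ℝ) * lam))
    (hM : ∀ n : ℕ, M n =
      lamSeq n * (n.factorial : ℝ) * kappa n *
        (((n : ℝ) * kappa n) / (2 * γ n * kappa (n - 1))) ^ n) :
    Tendsto (fun n : ℕ => (1 / (n : ℝ)) * Real.log (M n)) atTop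
      (nhds (lam + Real.log Real.pi - Real.log ρ - 1 / 2)) ∧
    (ρ > Real.exp lam * Real.pi / Real.sqrt (Real.exp 1) → Tendsto M atTop (nhds 0)) ∧
    (ρ < Real.exp lam * Real.pi / Real.sqrt (Real.exp 1) → Tendsto M atTop atTop) := by
  have hM_eq (n : ℕ) : M n = pointIntensity lam α n * zeroCellMeanVolume n (γ n) := by
    rw [hM, hlam, pointIntensity, zeroCellMeanVolume]
    ring
  have hMpos : ∀ᶠ n in atTop, 0 < M n := by
    filter_upwards [eventually_ne_atTop 0] with n hn
    rw [hM_eq]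
    exact mul_pos (pointIntensity_pos lam α hn) (zeroCellMeanVolume_pos hn (hγpos n))
  have hlog : Tendsto (fun n : ℕ => log (M n) / n) atTop
      (𝓝 (lam + log π - log ρ - 1 / 2)) := by
    simpa only [hM_eq] using
      tendsto_log_pointIntensity_mul_zeroCellMeanVolume_div lam α hρ hγ
  have hthreshold := log_exp_mul_pi_div_sqrt_exp_one lam
  refine ⟨by simpa only [one_div_mul_eq_div] using hlog, fun h => ?_, fun h => ?_⟩
  · have := log_lt_log (by positivity) h
    exact tendsto_zero_of_tendsto_log_div_neg tendsto_natCast_atTop_atTop hMpos hlog (by linarith)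
  · have := log_lt_log hρ h
    exact tendsto_atTop_of_tendsto_log_div_pos tendsto_natCast_atTop_atTop hMpos hlog (by linarith)
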